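/- arXiv:2212.04644 — 8 statements merged into one kernel-verified Lean document; each statement's English description precedes it below -/
import Mathlib

section
/- Let λ > 0, let R be an m×m real symmetric positive definite matrix, let B be an n×m real matrix, and define Φ := B R⁻¹ Bᵀ − (1/λ) I. If P is an n×n real symmetric positive semidefinite matrix such that λI − P is positive definite, then the matrix I + PΦ is invertible. -/
open Matrix

/-!
Put `G = B R⁻¹ Bᵀ`, which is positive semidefinite, and `E = λI − P`. It is enough that the
transpose `I + ΦP` has trivial kernel. If `x` lies in that kernel and `y = P x`, `z = E x`, then
`z = −λ G y`. Since `E + P = λI` and `E`, `P` commute, `λ P E = E P E + P E P`, which on `x` reads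
`λ (y ⬝ z) = z ⬝ P z + y ⬝ E y`. The left side is `−λ² (y ⬝ G y) ≤ 0`, while both terms on the right
are nonnegative; hence `y ⬝ E y ≤ 0`, so `y = 0` as `E` is positive definite. Then `z = 0` and
`λ x = z + y = 0`.
-/

/-- With `Φ := B R⁻¹ Bᵀ − (1/λ) I`, if `R` is symmetric positive
definite, `P` is symmetric positive semidefinite and `λI − P` is positive definite,
then `I + PΦ` is invertible. -/
theorem stmt_1 {n m : ℕ} (lam : ℝ) (hlam : 0 < lam)
    (R : Matrix (Fin m) (Fin m) ℝ) (hR : R.PosDef)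
    (B : Matrix (Fin n) (Fin m) ℝ)
    (P : Matrix (Fin n) (Fin n) ℝ) (hP : P.PosSemidef)
    (hpd : (lam • (1 : Matrix (Fin n) (Fin n) ℝ) - P).PosDef) :
    IsUnit ((1 : Matrix (Fin n) (Fin n) ℝ)
        + P * (B * R⁻¹ * Bᵀ - lam⁻¹ • (1 : Matrix (Fin n) (Fin n) ℝ))) := by
  have hG : (B * R⁻¹ * Bᵀ).PosSemidef := by
    simpa using hR.inv.posSemidef.mul_mul_conjTranspose_same B
  generalize B * R⁻¹ * Bᵀ = G at hG
  have hPt : Pᵀ = P := by simpa using hP.isHermitian.eq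
  have hGt : Gᵀ = G := by simpa using hG.isHermitian.eq
  rw [← Matrix.isUnit_transpose, ← Matrix.mulVec_injective_iff_isUnit]
  refine (injective_iff_map_eq_zero (Matrix.mulVecLin _)).2 ?_
  intro x hx
  obtain ⟨y, hy⟩ : ∃ y, y = P *ᵥ x := ⟨_, rfl⟩
  have hx' : x + (G *ᵥ y - lam⁻¹ • y) = 0 := by
    simpa [Matrix.transpose_mul, hPt, hGt, Matrix.add_mulVec, Matrix.sub_mulVec, Matrix.sub_mul,
      ← Matrix.mulVec_mulVec, Matrix.smul_mulVec, ← hy] using hx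
  have hz : lam • x - y = -(lam • (G *ᵥ y)) := by
    have h := congrArg (lam • ·) hx'
    simp only [smul_add, smul_sub, smul_smul, mul_inv_cancel₀ hlam.ne', one_smul, smul_zero] at h
    rw [← sub_eq_zero, ← h]
    abel
  have hsymm : x ⬝ᵥ (P *ᵥ y) = y ⬝ᵥ y := by
    rw [Matrix.dotProduct_mulVec, ← Matrix.mulVec_transpose, hPt, ← hy]
  have hy0 : y = 0 := by
    by_contra hne
    have h1 := hpd.dotProduct_mulVec_pos hne
    have h2 := hG.dotProduct_mulVec_nonneg y
    have h3 := hP.dotProduct_mulVec_nonneg (lam • x - y)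
    have h4 := congrArg (y ⬝ᵥ ·) hz
    simp only [star_trivial, Matrix.sub_mulVec, Matrix.smul_mulVec, Matrix.one_mulVec,
      Matrix.mulVec_sub, Matrix.mulVec_smul, dotProduct_sub, sub_dotProduct, dotProduct_smul,
      smul_dotProduct, dotProduct_neg, smul_eq_mul, ← hy, hsymm] at h1 h2 h3 h4
    rw [dotProduct_comm y x] at h4
    rw [h4] at h3
    nlinarith [mul_nonneg (mul_nonneg hlam.le hlam.le) h2]
  simpa [hy0] using hx'
end

section
/- Let λ > 0, let R be an m×m real symmetric positive definite matrix, let P be an n×n real symmetric positive semidefinite matrix with λI − P positive definite, let A be an n×n real matrix, B an n×m real matrix, and x̄, r, ŵ ∈ ℝⁿ. Set Φ := B R⁻¹ Bᵀ − (1/λ) I and assume I + PΦ is invertible. Define F(u,w) := (Ax̄ + Bu + w)ᵀP(Ax̄ + Bu + w) + 2rᵀ(Ax̄ + Bu + w) + uᵀRu − λ‖w − ŵ‖² for u ∈ ℝᵐ, w ∈ ℝⁿ. Let u* := −R⁻¹Bᵀ(I + PΦ)⁻¹(P A x̄ + P ŵ + r) and w* := (λI − P)⁻¹(P(Ax̄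 + Bu*) + r + λŵ). Then (u*, w*) is a saddle point of F: F(u*, w) ≤ F(u*, w*) ≤ F(u, w*) for all u ∈ ℝᵐ and w ∈ ℝⁿ; moreover the first inequality is strict whenever w ≠ w*, and the second is strict whenever u ≠ u*. -/
/-!
`F` is quadratic, so the saddle property follows from stationarity of `(u*, w*)` in each variable
together with the sign of the two diagonal second-order terms. Put
`y := (I + PΦ)⁻¹ (P A x̄ + P ŵ + r)`. Then `R u* = -Bᵀ y`, and `w* = ŵ + y / λ`, because the latter
solves the linear system that defines `w*`. Hence, with `z* := A x̄ + B u* + w*`,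
`P z* + r = y = λ (w* - ŵ)`, which gives stationarity in `w`, and `Bᵀ (P z* + r) + R u* = 0`, which
gives stationarity in `u`. Expanding exactly,
`F(u*, w* + d) = F(u*, w*) - dᵀ (λ I - P) d` and
`F(u* + e, w*) = F(u*, w*) + (B e)ᵀ P (B e) + eᵀ R e`.
-/

open Matrix

theorem quad_add {k : ℕ} (M : Matrix (Fin k) (Fin k) ℝ) (hM : Mᵀ = M) (x d : Fin k → ℝ) :
    (x + d) ⬝ᵥ (M *ᵥ (x + d)) = x ⬝ᵥ (M *ᵥ x) + 2 * (d ⬝ᵥ (M *ᵥ x)) + d ⬝ᵥ (M *ᵥ d) := by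
  have h : x ⬝ᵥ (M *ᵥ d) = d ⬝ᵥ (M *ᵥ x) := by
    rw [dotProduct_mulVec, ← mulVec_transpose, hM, dotProduct_comm]
  rw [mulVec_add, add_dotProduct, dotProduct_add, dotProduct_add, h]
  ring

/-- Deterministic core of the paper's Lemma 2: `(u*, w*)` is a
(strict) saddle point of
`F(u,w) = (Ax̄+Bu+w)ᵀP(Ax̄+Bu+w) + 2rᵀ(Ax̄+Bu+w) + uᵀRu − λ‖w−ŵ‖²`. -/
theorem stmt_2 {n m : ℕ} (lam : ℝ) (hlam : 0 < lam)
    (R : Matrix (Fin m) (Fin m) ℝ) (hR : R.PosDef)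
    (P : Matrix (Fin n) (Fin n) ℝ) (hP : P.PosSemidef)
    (hpd : (lam • (1 : Matrix (Fin n) (Fin n) ℝ) - P).PosDef)
    (A : Matrix (Fin n) (Fin n) ℝ) (B : Matrix (Fin n) (Fin m) ℝ)
    (xbar r what : Fin n → ℝ) :
    let Φ : Matrix (Fin n) (Fin n) ℝ :=
      B * R⁻¹ * Bᵀ - lam⁻¹ • (1 : Matrix (Fin n) (Fin n) ℝ);
    ∀ _hinv : IsUnit ((1 : Matrix (Fin n) (Fin n) ℝ) + P * Φ),
    let F : (Fin m → ℝ) → (Fin n → ℝ) → ℝ := fun u w =>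
      (A *ᵥ xbar + B *ᵥ u + w) ⬝ᵥ (P *ᵥ (A *ᵥ xbar + B *ᵥ u + w))
        + 2 * (r ⬝ᵥ (A *ᵥ xbar + B *ᵥ u + w))
        + u ⬝ᵥ (R *ᵥ u)
        - lam * ((w - what) ⬝ᵥ (w - what));
    let ustar : Fin m → ℝ :=
      -((R⁻¹ * Bᵀ * ((1 : Matrix (Fin n) (Fin n) ℝ) + P * Φ)⁻¹) *ᵥ
          (P *ᵥ (A *ᵥ xbar) + P *ᵥ what + r));
    let wstar : Fin n → ℝ :=
      (lam • (1 : Matrix (Fin n) (Fin n) ℝ) - P)⁻¹ *ᵥ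
        (P *ᵥ (A *ᵥ xbar + B *ᵥ ustar) + r + lam • what);
    (∀ w : Fin n → ℝ, F ustar w ≤ F ustar wstar) ∧
    (∀ u : Fin m → ℝ, F ustar wstar ≤ F u wstar) ∧
    (∀ w : Fin n → ℝ, w ≠ wstar → F ustar w < F ustar wstar) ∧
    (∀ u : Fin m → ℝ, u ≠ ustar → F ustar wstar < F u wstar) := by
  intro Φ hinv F ustar wstar
  have hPt : Pᵀ = P := by simpa using hP.isHermitian.eq
  have hRt : Rᵀ = R := by simpa using hR.isHermitian.eq
  set g : Fin n → ℝ := P *ᵥ (A *ᵥ xbar) + P *ᵥ what + r with hg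
  set y : Fin n → ℝ := (1 + P * Φ)⁻¹ *ᵥ g with hy
  have hRdet : IsUnit R.det := (Matrix.isUnit_iff_isUnit_det R).1 hR.isUnit
  have hy_eq : y + P *ᵥ (Φ *ᵥ y) = g := by
    have h : (1 + P * Φ) *ᵥ y = g := by
      rw [hy, mulVec_mulVec, mul_nonsing_inv _ ((Matrix.isUnit_iff_isUnit_det _).1 hinv),
        one_mulVec]
    rw [← h, add_mulVec, one_mulVec, mulVec_mulVec]
  have hu : ustar = -(R⁻¹ *ᵥ (Bᵀ *ᵥ y)) := by
    rw [hy, mulVec_mulVec, mulVec_mulVec]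
  have hRu : R *ᵥ ustar = -(Bᵀ *ᵥ y) := by
    rw [hu, mulVec_neg, mulVec_mulVec, mul_nonsing_inv _ hRdet, one_mulVec]
  have hBu : B *ᵥ ustar = -(Φ *ᵥ y) - lam⁻¹ • y := by
    rw [hu]
    simp only [Φ, mulVec_neg, sub_mulVec, smul_mulVec, one_mulVec, mulVec_mulVec,
      Matrix.mul_assoc]
    abel
  have hw : wstar = what + lam⁻¹ • y := by
    have h : P *ᵥ (A *ᵥ xbar + B *ᵥ ustar) + r + lam • what
        = (lam • (1 : Matrix (Fin n) (Fin n) ℝ) - P) *ᵥ (what + lam⁻¹ • y) := by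
      have hyg : y = g - P *ᵥ (Φ *ᵥ y) := eq_sub_of_add_eq hy_eq
      rw [hBu]
      simp only [sub_mulVec, smul_mulVec, one_mulVec, mulVec_add, mulVec_sub, mulVec_neg,
        smul_smul, mul_inv_cancel₀ hlam.ne', one_smul]
      -- Hide the occurrences of `y` under `P`, so that `rw` replaces only the free-standing one.
      have hsub : y = P *ᵥ (A *ᵥ xbar) + P *ᵥ what + r - P *ᵥ (Φ *ᵥ y) := hyg
      generalize P *ᵥ (Φ *ᵥ y) = p at *
      generalize P *ᵥ (lam⁻¹ • y) = q at *
      rw [hsub]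
      abel
    simp only [wstar]
    rw [h, mulVec_mulVec,
      nonsing_inv_mul _ ((Matrix.isUnit_iff_isUnit_det _).1 hpd.isUnit), one_mulVec]
  have hlw : lam • (wstar - what) = y := by
    rw [hw, add_sub_cancel_left, smul_smul, mul_inv_cancel₀ hlam.ne', one_smul]
  have hz : P *ᵥ (A *ᵥ xbar + B *ᵥ ustar + wstar) = y - r := by
    rw [hBu, hw, show A *ᵥ xbar + (-(Φ *ᵥ y) - lam⁻¹ • y) + (what + lam⁻¹ • y)
      = A *ᵥ xbar + what - Φ *ᵥ y by abel, mulVec_sub, mulVec_add]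
    rw [hg] at hy_eq
    rw [eq_sub_iff_add_eq, sub_add_eq_add_sub, sub_eq_iff_eq_add]
    exact hy_eq.symm
  have keyw : ∀ d, F ustar (wstar + d) = F ustar wstar
      - d ⬝ᵥ ((lam • (1 : Matrix (Fin n) (Fin n) ℝ) - P) *ᵥ d) := by
    intro d
    have h1 : lam * (d ⬝ᵥ (wstar - what)) = d ⬝ᵥ y := by
      rw [← hlw, dotProduct_smul, smul_eq_mul]
    have h2 : (wstar + d - what) ⬝ᵥ (wstar + d - what) = (wstar - what) ⬝ᵥ (wstar - what)
        + 2 * (d ⬝ᵥ (wstar - what)) + d ⬝ᵥ d := by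
      rw [add_sub_right_comm]
      simpa only [one_mulVec] using quad_add 1 transpose_one (wstar - what) d
    simp only [F]
    rw [← add_assoc, quad_add P hPt, hz, h2, sub_mulVec, smul_mulVec, one_mulVec,
      dotProduct_sub d y r, dotProduct_sub d (lam • d), dotProduct_smul, smul_eq_mul,
      dotProduct_add r _ d, dotProduct_comm d r]
    linear_combination (-2) * h1
  have keyu : ∀ e, F (ustar + e) wstar = F ustar wstar
      + ((B *ᵥ e) ⬝ᵥ (P *ᵥ (B *ᵥ e)) + e ⬝ᵥ (R *ᵥ e)) := by
    intro e
    have h1 : e ⬝ᵥ (Bᵀ *ᵥ y) = (B *ᵥ e) ⬝ᵥ y := by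
      rw [dotProduct_mulVec, vecMul_transpose]
    simp only [F]
    rw [mulVec_add B, show A *ᵥ xbar + (B *ᵥ ustar + B *ᵥ e) + wstar
      = (A *ᵥ xbar + B *ᵥ ustar + wstar) + B *ᵥ e by abel, quad_add P hPt, quad_add R hRt,
      hz, hRu, dotProduct_neg e, h1, dotProduct_sub (B *ᵥ e), dotProduct_add r _ (B *ᵥ e),
      dotProduct_comm (B *ᵥ e) r]
    ring
  have hwlt : ∀ w, w ≠ wstar → F ustar w < F ustar wstar := by
    intro w hne
    have h := keyw (w - wstar)
    rw [add_sub_cancel] at h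
    have hpos := hpd.dotProduct_mulVec_pos (sub_ne_zero.2 hne)
    rw [star_trivial] at hpos
    linarith
  have hult : ∀ u, u ≠ ustar → F ustar wstar < F u wstar := by
    intro u hne
    have h := keyu (u - ustar)
    rw [add_sub_cancel] at h
    have hpos := hR.dotProduct_mulVec_pos (sub_ne_zero.2 hne)
    have hnn := hP.dotProduct_mulVec_nonneg (B *ᵥ (u - ustar))
    rw [star_trivial] at hpos hnn
    linarith
  refine ⟨fun w => ?_, fun u => ?_, hwlt, hult⟩
  · rcases eq_or_ne w wstar with rfl | hne
    · exact le_rfl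
    · exact (hwlt w hne).le
  · rcases eq_or_ne u ustar with rfl | hne
    · exact le_rfl
    · exact (hult u hne).le
end

section
/- Let A, P, Φ, Q be n×n real matrices with P and Φ symmetric, and suppose I + PΦ is invertible. Then (Q + AᵀPA) − (Q + Aᵀ(I + PΦ)⁻¹ P A) = Aᵀ P Φ (I + PΦ)⁻¹ P A. Moreover, if P and Φ are positive semidefinite, then the matrix Aᵀ P Φ (I + PΦ)⁻¹ P A is symmetric positive semidefinite. (This identifies the matrix S_t = Q + AᵀP_{t+1}A − P_t appearing in the value-function recursion and shows it is positive semidefinite.) -/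
/-!
Write `W = (1 + PΦ)⁻¹`. The identity follows from `PΦW = 1 - W`. For positivity, transposing
`(1 + PΦ)W = 1` gives `Wᵀ(1 + ΦP) = 1`, so `ΦW = Wᵀ(1 + ΦP)ΦW = Wᵀ(Φ + ΦPΦ)W`. Hence
`AᵀPΦWPA = (WPA)ᵀ(Φ + ΦPΦ)(WPA)` is a congruence of a sum of positive semidefinite matrices.
-/

open Matrix

/-- The matrix `S_t = (Q + AᵀPA) − (Q + Aᵀ(I+PΦ)⁻¹PA)` equals
`AᵀPΦ(I+PΦ)⁻¹PA`, and the latter is symmetric positive semidefinite whenever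
`P` and `Φ` are positive semidefinite. -/
theorem stmt_3 {n : ℕ} (A P Φ Q : Matrix (Fin n) (Fin n) ℝ)
    (hPsym : P.IsSymm) (hΦsym : Φ.IsSymm)
    (hinv : IsUnit ((1 : Matrix (Fin n) (Fin n) ℝ) + P * Φ)) :
    ((Q + Aᵀ * P * A) - (Q + Aᵀ * ((1 : Matrix (Fin n) (Fin n) ℝ) + P * Φ)⁻¹ * P * A)
        = Aᵀ * P * Φ * ((1 : Matrix (Fin n) (Fin n) ℝ) + P * Φ)⁻¹ * P * A)
    ∧ (P.PosSemidef → Φ.PosSemidef →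
        (Aᵀ * P * Φ * ((1 : Matrix (Fin n) (Fin n) ℝ) + P * Φ)⁻¹ * P * A).PosSemidef) := by
  have hW : (1 + P * Φ) * (1 + P * Φ)⁻¹ = 1 :=
    Matrix.mul_nonsing_inv _ ((Matrix.isUnit_iff_isUnit_det _).mp hinv)
  generalize (1 + P * Φ)⁻¹ = W at hW ⊢
  constructor
  · have h : P * Φ * W = 1 - W := by
      rw [← hW]; noncomm_ring
    calc (Q + Aᵀ * P * A) - (Q + Aᵀ * W * P * A) = Aᵀ * (1 - W) * P * A := by noncomm_ring
      _ = Aᵀ * P * Φ * W * P * A := by rw [← h]; noncomm_ring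
  · intro hP hΦ
    have hWt : Wᵀ * (1 + Φ * P) = 1 := by
      have := congrArg Matrix.transpose hW
      simpa [Matrix.transpose_mul, hPsym.eq, hΦsym.eq] using this
    have hmid : (Φ + Φ * P * Φ).PosSemidef := by
      have h := hP.conjTranspose_mul_mul_same Φ
      rw [hΦ.isHermitian.eq] at h
      exact hΦ.add h
    have hcongr : Aᵀ * P * Φ * W * P * A = (W * P * A)ᴴ * (Φ + Φ * P * Φ) * (W * P * A) := by
      rw [Matrix.conjTranspose_eq_transpose_of_trivial, Matrix.transpose_mul,
        Matrix.transpose_mul, hPsym.eq]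
      calc Aᵀ * P * Φ * W * P * A = Aᵀ * P * 1 * Φ * W * P * A := by rw [mul_one]
        _ = _ := by rw [← hWt]; noncomm_ring
    rw [hcongr]
    exact hmid.conjTranspose_mul_mul_same _
end

section
/- Let P, Q, Φ be n×n real symmetric positive semidefinite matrices and A an n×n real matrix. Then the matrix I + PΦ is invertible, the matrix (I + PΦ)⁻¹P is symmetric positive semidefinite, and the matrix Q + Aᵀ(I + PΦ)⁻¹ P A is symmetric positive semidefinite. (Hence the Riccati map P ↦ Q + Aᵀ(I + PΦ)⁻¹PA is well defined and preserves the cone of symmetric positive semidefinite matrices.) -/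
/-!
Factor `P = Bᴴ B` and put `S = 1 + B Φ Bᴴ`, which is positive definite. By Sylvester's identity
`det (1 + PΦ) = det S ≠ 0`, so `1 + PΦ` is invertible. The push-through identity
`(1 + PΦ) Bᴴ = Bᴴ S` then gives `(1 + PΦ)⁻¹ P = Bᴴ S⁻¹ B`, a congruence of the positive definite
matrix `S⁻¹`, and the Riccati image is the sum of `Q` and a further congruence by `A`.
-/

open Matrix

/-- For `P, Q, Φ` symmetric positive semidefinite, `I + PΦ` is
invertible, `(I+PΦ)⁻¹P` is symmetric positive semidefinite, and the Riccati image
`Q + Aᵀ(I+PΦ)⁻¹PA` is symmetric positive semidefinite. -/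
theorem stmt_4 {n : ℕ} (P Q Φ A : Matrix (Fin n) (Fin n) ℝ)
    (hP : P.PosSemidef) (hQ : Q.PosSemidef) (hΦ : Φ.PosSemidef) :
    IsUnit ((1 : Matrix (Fin n) (Fin n) ℝ) + P * Φ)
    ∧ (((1 : Matrix (Fin n) (Fin n) ℝ) + P * Φ)⁻¹ * P).PosSemidef
    ∧ (Q + Aᵀ * ((1 : Matrix (Fin n) (Fin n) ℝ) + P * Φ)⁻¹ * P * A).PosSemidef := by
  obtain ⟨B, hB⟩ : ∃ B : Matrix (Fin n) (Fin n) ℝ, P = Bᴴ * B := by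
    open scoped MatrixOrder in
    exact CStarAlgebra.nonneg_iff_eq_star_mul_self.mp hP.nonneg
  have hS : (1 + B * Φ * Bᴴ).PosDef :=
    PosDef.one.add_posSemidef (hΦ.mul_mul_conjTranspose_same B)
  have hdetS : IsUnit (1 + B * Φ * Bᴴ).det := (isUnit_iff_isUnit_det _).mp hS.isUnit
  have hdet : IsUnit (1 + P * Φ).det := by
    rwa [hB, Matrix.mul_assoc, det_one_add_mul_comm]
  have hpush : (1 + P * Φ) * Bᴴ = Bᴴ * (1 + B * Φ * Bᴴ) := by
    rw [hB]; noncomm_ring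
  have hinv : (1 + P * Φ)⁻¹ * P = Bᴴ * (1 + B * Φ * Bᴴ)⁻¹ * B := by
    have h : P = (1 + P * Φ) * (Bᴴ * (1 + B * Φ * Bᴴ)⁻¹ * B) := by
      rw [← Matrix.mul_assoc, ← Matrix.mul_assoc, hpush, mul_nonsing_inv_cancel_right _ _ hdetS, hB]
    calc (1 + P * Φ)⁻¹ * P
        = (1 + P * Φ)⁻¹ * ((1 + P * Φ) * (Bᴴ * (1 + B * Φ * Bᴴ)⁻¹ * B)) := by rw [← h]
      _ = _ := nonsing_inv_mul_cancel_left _ _ hdet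
  have hpsd : ((1 + P * Φ)⁻¹ * P).PosSemidef := by
    rw [hinv]
    exact hS.inv.posSemidef.conjTranspose_mul_mul_same B
  refine ⟨(isUnit_iff_isUnit_det _).mpr hdet, hpsd, hQ.add ?_⟩
  have h := hpsd.conjTranspose_mul_mul_same A
  rwa [conjTranspose_eq_transpose_of_trivial, ← Matrix.mul_assoc] at h
end

section
/- Let λ > 0, R an m×m real symmetric positive definite matrix, A an n×n real matrix, B an n×m real matrix, ŵ, r ∈ ℝⁿ, and Φ := B R⁻¹ Bᵀ − (1/λ) I. Let P be an n×n real symmetric matrix such that λI − P is invertible and I + PΦ is invertible. Define K := −R⁻¹Bᵀ(I + PΦ)⁻¹PA and L := −R⁻¹Bᵀ(I + PΦ)⁻¹(Pŵ + r). Then the following two identities hold: (λI − P)⁻¹ P (A + BK) = (1/λ)(I + PΦ)⁻¹ P A, and (λI − P)⁻¹ (P B L + r + λŵ) = (1/λ)(I + PΦ)⁻¹ (P ŵ + r) + ŵ. (These rewrite the worst-case mean parameters H_ss and G_ss in the form used in the stability analysis.) -/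
/-!
Put `S = B R⁻¹ Bᵀ`, `Q = λI − P` and `N = (I + PΦ)⁻¹`. Since `I + PΦ = λ⁻¹ Q + P S`, multiplying
by `N` on the right gives `I − P S N = λ⁻¹ Q N`, i.e. `Q⁻¹ (I − P S N) = λ⁻¹ N`
(`inv_mul_one_sub`). Both identities are this one applied to `P A` and to `v = P ŵ + r`:
`P (A + B K) = (I − P S N) P A` and `P B L + r + λ ŵ = (I − P S N) v + Q ŵ`.
-/

open Matrix

/-- The identity `Q⁻¹ (I − P S N) = λ⁻¹ N`, where `Q = λI − P` and
`N = (I + P (S − λ⁻¹ I))⁻¹`. -/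
theorem inv_mul_one_sub {n : ℕ} {lam : ℝ} (hlam : lam ≠ 0) (P S : Matrix (Fin n) (Fin n) ℝ)
    (hQ : IsUnit (lam • (1 : Matrix (Fin n) (Fin n) ℝ) - P))
    (hM : IsUnit ((1 : Matrix (Fin n) (Fin n) ℝ) + P * (S - lam⁻¹ • 1))) :
    (lam • (1 : Matrix (Fin n) (Fin n) ℝ) - P)⁻¹ * (1 - P * S * (1 + P * (S - lam⁻¹ • 1))⁻¹)
      = lam⁻¹ • (1 + P * (S - lam⁻¹ • 1))⁻¹ := by
  have hMN := mul_nonsing_inv _ ((isUnit_iff_isUnit_det _).1 hM)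
  have hQQ := nonsing_inv_mul _ ((isUnit_iff_isUnit_det _).1 hQ)
  set N := ((1 : Matrix (Fin n) (Fin n) ℝ) + P * (S - lam⁻¹ • 1))⁻¹
  have key : 1 - P * S * N = (lam • (1 : Matrix (Fin n) (Fin n) ℝ) - P) * (lam⁻¹ • N) := by
    refine sub_eq_iff_eq_add.2 (hMN.symm.trans ?_)
    simp only [add_mul, sub_mul, mul_sub, smul_mul_assoc, mul_smul_comm, one_mul, mul_one,
      smul_sub, smul_smul, inv_mul_cancel₀ hlam, one_smul]
    abel
  rw [key, ← Matrix.mul_assoc, hQQ, Matrix.one_mul]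

/-- The worst-case mean parameters `H` and `G` can be rewritten:
`(λI−P)⁻¹P(A+BK) = (1/λ)(I+PΦ)⁻¹PA` and
`(λI−P)⁻¹(PBL + r + λŵ) = (1/λ)(I+PΦ)⁻¹(Pŵ + r) + ŵ`. -/
theorem stmt_9 {n m : ℕ} (lam : ℝ) (hlam : 0 < lam)
    (R : Matrix (Fin m) (Fin m) ℝ) (hR : R.PosDef)
    (A : Matrix (Fin n) (Fin n) ℝ) (B : Matrix (Fin n) (Fin m) ℝ)
    (what r : Fin n → ℝ)
    (P : Matrix (Fin n) (Fin n) ℝ) (hPsym : P.IsSymm)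
    (hinv1 : IsUnit (lam • (1 : Matrix (Fin n) (Fin n) ℝ) - P))
    (hinv2 : IsUnit ((1 : Matrix (Fin n) (Fin n) ℝ)
        + P * (B * R⁻¹ * Bᵀ - lam⁻¹ • (1 : Matrix (Fin n) (Fin n) ℝ)))) :
    let Φ : Matrix (Fin n) (Fin n) ℝ :=
      B * R⁻¹ * Bᵀ - lam⁻¹ • (1 : Matrix (Fin n) (Fin n) ℝ);
    let K : Matrix (Fin m) (Fin n) ℝ :=
      -(R⁻¹ * Bᵀ * ((1 : Matrix (Fin n) (Fin n) ℝ) + P * Φ)⁻¹ * P * A);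
    let L : Fin m → ℝ :=
      -((R⁻¹ * Bᵀ * ((1 : Matrix (Fin n) (Fin n) ℝ) + P * Φ)⁻¹) *ᵥ (P *ᵥ what + r));
    ((lam • (1 : Matrix (Fin n) (Fin n) ℝ) - P)⁻¹ * P * (A + B * K)
        = lam⁻¹ • (((1 : Matrix (Fin n) (Fin n) ℝ) + P * Φ)⁻¹ * P * A))
    ∧ ((lam • (1 : Matrix (Fin n) (Fin n) ℝ) - P)⁻¹ *ᵥ
          (P *ᵥ (B *ᵥ L) + r + lam • what)
        = lam⁻¹ • ((((1 : Matrix (Fin n) (Fin n) ℝ) + P * Φ)⁻¹) *ᵥ (P *ᵥ what + r))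
            + what) := by
  intro Φ K L
  have key := inv_mul_one_sub hlam.ne' P (B * R⁻¹ * Bᵀ) hinv1 hinv2
  have hQQ := nonsing_inv_mul _ ((isUnit_iff_isUnit_det _).1 hinv1)
  change _ * (1 - P * _ * (1 + P * Φ)⁻¹) = lam⁻¹ • (1 + P * Φ)⁻¹ at key
  constructor
  · have h : P * (A + B * K) = (1 - P * (B * R⁻¹ * Bᵀ) * (1 + P * Φ)⁻¹) * (P * A) := by
      simp only [K, Matrix.mul_add, Matrix.mul_neg, Matrix.add_mul, Matrix.neg_mul,
        Matrix.one_mul, Matrix.mul_assoc, sub_eq_add_neg]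
    rw [Matrix.mul_assoc, h, ← Matrix.mul_assoc, key, smul_mul_assoc, Matrix.mul_assoc _ P A]
  · have h : P *ᵥ (B *ᵥ L) + r + lam • what
        = (1 - P * (B * R⁻¹ * Bᵀ) * (1 + P * Φ)⁻¹) *ᵥ (P *ᵥ what + r)
          + (lam • (1 : Matrix (Fin n) (Fin n) ℝ) - P) *ᵥ what := by
      have hL : P *ᵥ (B *ᵥ L)
          = -((P * (B * R⁻¹ * Bᵀ) * (1 + P * Φ)⁻¹) *ᵥ (P *ᵥ what + r)) := by
        simp only [L, mulVec_neg, mulVec_mulVec, Matrix.mul_assoc]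
      rw [hL, sub_mulVec, sub_mulVec, one_mulVec, smul_mulVec, one_mulVec]
      abel
    rw [h, mulVec_add, mulVec_mulVec, mulVec_mulVec, key, hQQ, one_mulVec, smul_mulVec]
end

section
/- Let X⁻ be an n×n real symmetric positive semidefinite matrix, C a p×n real matrix, and M a p×p real symmetric positive definite matrix. Define X := X⁻ − X⁻Cᵀ(C X⁻ Cᵀ + M)⁻¹ C X⁻ (the matrix C X⁻ Cᵀ + M is positive definite, hence invertible). Then X Cᵀ M⁻¹ = X⁻ Cᵀ (C X⁻ Cᵀ + M)⁻¹. (This is the Kalman gain identity relating the posterior and prior covariance forms of the filter gain.) -/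
open Matrix

/-- Kalman gain identity: with
`X = X⁻ − X⁻Cᵀ(CX⁻Cᵀ + M)⁻¹CX⁻`, one has `XCᵀM⁻¹ = X⁻Cᵀ(CX⁻Cᵀ + M)⁻¹`. -/
theorem stmt_10 {n p : ℕ} (Xm : Matrix (Fin n) (Fin n) ℝ) (hXm : Xm.PosSemidef)
    (C : Matrix (Fin p) (Fin n) ℝ)
    (M : Matrix (Fin p) (Fin p) ℝ) (hM : M.PosDef) :
    (Xm - Xm * Cᵀ * (C * Xm * Cᵀ + M)⁻¹ * C * Xm) * Cᵀ * M⁻¹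
      = Xm * Cᵀ * (C * Xm * Cᵀ + M)⁻¹ := by
  have hS : (C * Xm * Cᵀ + M).PosDef := by
    have h := hXm.mul_mul_conjTranspose_same C
    rw [conjTranspose_eq_transpose_of_trivial] at h
    exact PosDef.posSemidef_add h hM
  have hMu : IsUnit M.det := (isUnit_iff_isUnit_det M).1 hM.isUnit
  have hSu : IsUnit (C * Xm * Cᵀ + M).det := (isUnit_iff_isUnit_det _).1 hS.isUnit
  have hCX : C * Xm * Cᵀ = (C * Xm * Cᵀ + M) - M := (add_sub_cancel_right _ _).symm
  -- With `S = C X⁻ Cᵀ + M`, substituting `C X⁻ Cᵀ = S - M` gives `X Cᵀ = X⁻ Cᵀ S⁻¹ M`.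
  have key : (Xm - Xm * Cᵀ * (C * Xm * Cᵀ + M)⁻¹ * C * Xm) * Cᵀ
      = Xm * Cᵀ * (C * Xm * Cᵀ + M)⁻¹ * M := by
    generalize C * Xm * Cᵀ + M = S at hCX hSu ⊢
    calc (Xm - Xm * Cᵀ * S⁻¹ * C * Xm) * Cᵀ
        = Xm * Cᵀ - Xm * Cᵀ * S⁻¹ * (C * Xm * Cᵀ) := by
          simp only [Matrix.sub_mul, Matrix.mul_assoc]
      _ = Xm * Cᵀ * S⁻¹ * M := by
          rw [hCX, Matrix.mul_sub, nonsing_inv_mul_cancel_right _ _ hSu, sub_sub_cancel]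
  rw [key, mul_nonsing_inv_cancel_right _ _ hMu]
end

section
/- Let λ > 0, R an m×m real symmetric positive definite matrix, A an n×n real matrix, B an n×m real matrix, ŵ ∈ ℝⁿ, and Φ := B R⁻¹ Bᵀ − (1/λ) I. Let P be an n×n real symmetric matrix such that λI − P is invertible, I + PΦ is invertible, I − Aᵀ(I + PΦ)⁻¹ is invertible, and I + PΦ − Aᵀ is invertible. Define r := [I − Aᵀ(I + PΦ)⁻¹]⁻¹ Aᵀ(I + PΦ)⁻¹ P ŵ, L := −R⁻¹Bᵀ(I + PΦ)⁻¹(Pŵ + r), and G := (λI − P)⁻¹(P B L + r + λŵ). Then B L + G = (I − Φ(I + PΦ − Aᵀ)⁻¹ P) ŵ. (This identifies the constant driving term of the closed-loop mean-state recursion.) -/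
/-!
Write `M = I + PΦ` and `s = M⁻¹(Pŵ + r)`. The definition of `r` says `(I − AᵀM⁻¹) r = AᵀM⁻¹Pŵ`,
i.e. `r = Aᵀs`; together with `M s = Pŵ + r` this gives `(M − Aᵀ) s = Pŵ`, so the right-hand side
is `ŵ − Φ s`. Since `B R⁻¹ Bᵀ = Φ + λ⁻¹I`, one has `B L = −Φ s − λ⁻¹ s`, and it remains to see
`G = ŵ + λ⁻¹ s`, which follows by applying `λI − P` and using `r = s + PΦ s − Pŵ`.
-/

open Matrix

/-- A solution of `M x = b` with `M` invertible is `M⁻¹ b`. -/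
lemma inv_mulVec_eq_of_mulVec_eq {n : ℕ} {M : Matrix (Fin n) (Fin n) ℝ} (hM : IsUnit M)
    {x b : Fin n → ℝ} (h : M *ᵥ x = b) : M⁻¹ *ᵥ b = x := by
  rw [← h, mulVec_mulVec, nonsing_inv_mul _ ((isUnit_iff_isUnit_det M).1 hM), one_mulVec]

/-- The constant driving term of the closed-loop mean-state
recursion satisfies `BL + G = (I − Φ(I + PΦ − Aᵀ)⁻¹P)ŵ`. -/
theorem stmt_11 {n m : ℕ} (lam : ℝ) (hlam : 0 < lam)
    (R : Matrix (Fin m) (Fin m) ℝ) (hR : R.PosDef)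
    (A : Matrix (Fin n) (Fin n) ℝ) (B : Matrix (Fin n) (Fin m) ℝ)
    (what : Fin n → ℝ)
    (P : Matrix (Fin n) (Fin n) ℝ) (hPsym : P.IsSymm) :
    let Φ : Matrix (Fin n) (Fin n) ℝ :=
      B * R⁻¹ * Bᵀ - lam⁻¹ • (1 : Matrix (Fin n) (Fin n) ℝ);
    ∀ _hinv1 : IsUnit (lam • (1 : Matrix (Fin n) (Fin n) ℝ) - P),
    ∀ _hinv2 : IsUnit ((1 : Matrix (Fin n) (Fin n) ℝ) + P * Φ),
    ∀ _hinv3 : IsUnit ((1 : Matrix (Fin n) (Fin n) ℝ)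
        - Aᵀ * ((1 : Matrix (Fin n) (Fin n) ℝ) + P * Φ)⁻¹),
    ∀ _hinv4 : IsUnit ((1 : Matrix (Fin n) (Fin n) ℝ) + P * Φ - Aᵀ),
    let r : Fin n → ℝ :=
      ((((1 : Matrix (Fin n) (Fin n) ℝ)
            - Aᵀ * ((1 : Matrix (Fin n) (Fin n) ℝ) + P * Φ)⁻¹)⁻¹
          * (Aᵀ * ((1 : Matrix (Fin n) (Fin n) ℝ) + P * Φ)⁻¹) * P)) *ᵥ what;
    let L : Fin m → ℝ :=
      -((R⁻¹ * Bᵀ * ((1 : Matrix (Fin n) (Fin n) ℝ) + P * Φ)⁻¹) *ᵥ (P *ᵥ what + r));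
    let G : Fin n → ℝ :=
      (lam • (1 : Matrix (Fin n) (Fin n) ℝ) - P)⁻¹ *ᵥ
        (P *ᵥ (B *ᵥ L) + r + lam • what);
    B *ᵥ L + G
      = ((1 : Matrix (Fin n) (Fin n) ℝ)
          - Φ * ((1 : Matrix (Fin n) (Fin n) ℝ) + P * Φ - Aᵀ)⁻¹ * P) *ᵥ what := by
  intro Φ h1 h2 h3 h4 r L G
  have cancel : ∀ {N : Matrix (Fin n) (Fin n) ℝ}, IsUnit N → ∀ b, N *ᵥ (N⁻¹ *ᵥ b) = b := by
    intro N hN b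
    rw [mulVec_mulVec, mul_nonsing_inv _ ((isUnit_iff_isUnit_det N).1 hN), one_mulVec]
  obtain ⟨s, hs⟩ : ∃ s, s = (1 + P * Φ)⁻¹ *ᵥ (P *ᵥ what + r) := ⟨_, rfl⟩
  have hMs : s + P *ᵥ (Φ *ᵥ s) = P *ᵥ what + r := by
    have h := cancel h2 (P *ᵥ what + r)
    rwa [← hs, add_mulVec, one_mulVec, ← mulVec_mulVec] at h
  have hr : r = Aᵀ *ᵥ s := by
    have h : (1 - Aᵀ * (1 + P * Φ)⁻¹) *ᵥ r = (Aᵀ * (1 + P * Φ)⁻¹) *ᵥ (P *ᵥ what) := by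
      simp only [r]
      rw [← mulVec_mulVec, ← mulVec_mulVec]
      exact cancel h3 _
    rw [sub_mulVec, one_mulVec, sub_eq_iff_eq_add, ← mulVec_add, ← mulVec_mulVec, ← hs] at h
    exact h
  have hs' : (1 + P * Φ - Aᵀ)⁻¹ *ᵥ (P *ᵥ what) = s := by
    apply inv_mulVec_eq_of_mulVec_eq h4
    rw [sub_mulVec, add_mulVec, one_mulVec, ← mulVec_mulVec, hMs, ← hr, add_sub_cancel_right]
  have hBL : B *ᵥ L = -(Φ *ᵥ s) - lam⁻¹ • s := by
    have h : B * R⁻¹ * Bᵀ = Φ + lam⁻¹ • (1 : Matrix (Fin n) (Fin n) ℝ) := by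
      simp only [Φ, sub_add_cancel]
    have hL : L = -((R⁻¹ * Bᵀ) *ᵥ s) := by
      rw [hs, mulVec_mulVec]
    rw [hL, mulVec_neg, mulVec_mulVec, ← Matrix.mul_assoc, h, add_mulVec, smul_mulVec,
      one_mulVec]
    abel
  have hG : G = what + lam⁻¹ • s := by
    apply inv_mulVec_eq_of_mulVec_eq h1
    have hr' : r = s + P *ᵥ (Φ *ᵥ s) - P *ᵥ what := by rw [hMs]; abel
    rw [hBL, hr', sub_mulVec, smul_mulVec, one_mulVec, mulVec_sub, mulVec_neg, mulVec_add,
      smul_add, smul_smul, mul_inv_cancel₀ hlam.ne', one_smul]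
    abel
  rw [hBL, hG, sub_mulVec 1, one_mulVec, ← mulVec_mulVec, ← mulVec_mulVec, hs']
  abel
end

section
/- Let λ > 0, R an m×m real symmetric positive definite matrix, Q an n×n real symmetric matrix, A an n×n real matrix, B an n×m real matrix, and Φ := B R⁻¹ Bᵀ − (1/λ) I. Let P be an n×n real symmetric matrix with λI − P positive definite and I + PΦ invertible, and suppose P satisfies the algebraic Riccati equation P = Q + Aᵀ(I + PΦ)⁻¹ P A. Define K := −R⁻¹Bᵀ(I + PΦ)⁻¹PA and Ã := A + BK. Then P = Q + Ãᵀ P Ã + Kᵀ R K + Ãᵀ P (λI − P)⁻¹ P Ã. (This rewrites the algebraic Riccati equation in closed-loop form.) -/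
open Matrix

/-!
Write `D = λI − P` and `W = (I + PΦ)⁻¹PA`, so that `K = −R⁻¹BᵀW` and `Ã = A − BR⁻¹BᵀW`.
Expanding `(I + PΦ)W = PA` gives `PÃ = λ⁻¹DW`. Hence `PÃ + PD⁻¹PÃ = λ⁻¹(D + P)W = W`, and
`ÃᵀW + KᵀRK = AᵀW + KᵀBᵀW − KᵀBᵀW = AᵀW`, which is the term in the Riccati equation.
-/

/-- Closed-loop form of the algebraic Riccati equation: with
`K = −R⁻¹Bᵀ(I+PΦ)⁻¹PA` and `Ã = A + BK`,
`P = Q + ÃᵀPÃ + KᵀRK + ÃᵀP(λI−P)⁻¹PÃ`. -/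
theorem stmt_13 {n m : ℕ} (lam : ℝ) (hlam : 0 < lam)
    (R : Matrix (Fin m) (Fin m) ℝ) (hR : R.PosDef)
    (Q : Matrix (Fin n) (Fin n) ℝ) (hQsym : Q.IsSymm)
    (A : Matrix (Fin n) (Fin n) ℝ) (B : Matrix (Fin n) (Fin m) ℝ)
    (P : Matrix (Fin n) (Fin n) ℝ) (hPsym : P.IsSymm)
    (hpd : (lam • (1 : Matrix (Fin n) (Fin n) ℝ) - P).PosDef) :
    let Φ : Matrix (Fin n) (Fin n) ℝ :=
      B * R⁻¹ * Bᵀ - lam⁻¹ • (1 : Matrix (Fin n) (Fin n) ℝ);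
    ∀ _hinv : IsUnit ((1 : Matrix (Fin n) (Fin n) ℝ) + P * Φ),
    ∀ _hare : P = Q + Aᵀ * ((1 : Matrix (Fin n) (Fin n) ℝ) + P * Φ)⁻¹ * P * A,
    let K : Matrix (Fin m) (Fin n) ℝ :=
      -(R⁻¹ * Bᵀ * ((1 : Matrix (Fin n) (Fin n) ℝ) + P * Φ)⁻¹ * P * A);
    let Atil : Matrix (Fin n) (Fin n) ℝ := A + B * K;
    P = Q + Atilᵀ * P * Atil + Kᵀ * R * K
        + Atilᵀ * P * (lam • (1 : Matrix (Fin n) (Fin n) ℝ) - P)⁻¹ * P * Atil := by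
  intro Φ hinv hare K Atil
  have hRu : IsUnit R.det := (Matrix.isUnit_iff_isUnit_det _).1 hR.isUnit
  have hDu : IsUnit (lam • (1 : Matrix (Fin n) (Fin n) ℝ) - P).det :=
    (Matrix.isUnit_iff_isUnit_det _).1 hpd.isUnit
  have hMu := (Matrix.isUnit_iff_isUnit_det _).1 hinv
  obtain ⟨D, hD⟩ : ∃ D, D = lam • (1 : Matrix (Fin n) (Fin n) ℝ) - P := ⟨_, rfl⟩
  obtain ⟨W, hW⟩ : ∃ W, W = (1 + P * Φ)⁻¹ * (P * A) := ⟨_, rfl⟩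
  have hK : K = -(R⁻¹ * (Bᵀ * W)) := by
    simp only [K, hW, Matrix.mul_assoc]
  have hMW : W + P * (Φ * W) = P * A := by
    have h := Matrix.mul_nonsing_inv_cancel_left (1 + P * Φ) (P * A) hMu
    rwa [← hW, Matrix.add_mul, Matrix.one_mul, Matrix.mul_assoc] at h
  have hΦW : Φ * W = B * (R⁻¹ * (Bᵀ * W)) - lam⁻¹ • W := by
    simp only [Φ, Matrix.sub_mul, Matrix.smul_mul, Matrix.one_mul, Matrix.mul_assoc]
  have hDW : lam⁻¹ • (D * W) = W - lam⁻¹ • (P * W) := by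
    rw [hD, Matrix.sub_mul, Matrix.smul_mul, Matrix.one_mul, smul_sub, smul_smul,
      inv_mul_cancel₀ hlam.ne', one_smul]
  have hPA : P * Atil = lam⁻¹ • (D * W) := by
    have h : P * Atil = P * A - P * (B * (R⁻¹ * (Bᵀ * W))) := by
      simp only [Atil, hK, Matrix.mul_add, Matrix.mul_neg, sub_eq_add_neg]
    rw [h, ← hMW, hΦW, hDW, Matrix.mul_sub, Matrix.mul_smul]
    abel
  have hsum : P * Atil + P * (D⁻¹ * (P * Atil)) = W := by
    have h : D⁻¹ * (P * Atil) = lam⁻¹ • W := by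
      rw [hPA, Matrix.mul_smul, Matrix.nonsing_inv_mul_cancel_left D W (hD ▸ hDu)]
    rw [h, hPA, hDW, Matrix.mul_smul, sub_add_cancel]
  have hKRK : Kᵀ * (R * K) = -(Kᵀ * (Bᵀ * W)) := by
    have h : R * K = -(Bᵀ * W) := by
      rw [hK, Matrix.mul_neg, Matrix.mul_nonsing_inv_cancel_left R _ hRu]
    rw [h, Matrix.mul_neg]
  have hAt : Atilᵀ * W = Aᵀ * W + Kᵀ * (Bᵀ * W) := by
    simp only [Atil, Matrix.transpose_add, Matrix.transpose_mul, Matrix.add_mul,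
      Matrix.mul_assoc]
  have hP : P = Q + Aᵀ * W := by
    rw [hW]
    simpa only [Matrix.mul_assoc] using hare
  rw [← hD]
  calc P = Q + (Atilᵀ * W + Kᵀ * (R * K)) := by
        rw [hAt, hKRK, add_neg_cancel_right]
        exact hP
    _ = Q + Atilᵀ * P * Atil + Kᵀ * R * K + Atilᵀ * P * D⁻¹ * P * Atil := by
        rw [← hsum]
        simp only [Matrix.mul_add, Matrix.mul_assoc]
        abel
end
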